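/- Let π be a weak unichain policy for 𝔅_n with twin policy π' for 𝔇_n, and let (v,w) be an edge of 𝔅_n other than (s,s). Then z_{π',𝔇_n}(x_{v,w}, y_{v,w}) = p_v · z_{π,𝔅_n}(v,w). In particular, (x_{v,w}, y_{v,w}) is an improving switch for π' if and only if (v,w) is an improving switch for π. -/

import Mathlib

/-! ## The Markov decision process `𝔅_n` -/

/-- Vertices of the MDP `𝔅_n`: a transportation vertex `t`, a sink `s`, a dummy vertex `d`,
and vertices `a i`, `b i` for `i ∈ {1,…,n}`. -/
inductive BV : Type where
  | t : BV
  | s : BV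
  | d : BV
  | a : ℕ → BV
  | b : ℕ → BV
deriving DecidableEq

/-- The vertex `a i` for `i ∈ {1,…,n+1}`, with the convention `a (n+1) = s`. -/
def aN (n i : ℕ) : BV := if i = n + 1 then BV.s else BV.a i

/-- The vertex `b i` for `i ∈ {1,…,n+1}`, with the convention `b (n+1) = d`. -/
def bN (n i : ℕ) : BV := if i = n + 1 then BV.d else BV.b i

/-- The vertex set of `𝔅_n`. -/
def IsBVertex (n : ℕ) : BV → Prop
  | BV.t => True
  | BV.s => True
  | BV.d => True
  | BV.a i => 1 ≤ i ∧ i ≤ n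
  | BV.b i => 1 ≤ i ∧ i ≤ n

/-- The edge relation of `𝔅_n`: travel, enter, skip, board, stay, leave edges,
the edge `(d,s)` and the self-loop `(s,s)`. -/
def BEdge (n : ℕ) (u v : BV) : Prop :=
  (∃ i, 1 ≤ i ∧ i ≤ n ∧ u = BV.t ∧ v = BV.a i) ∨
  (∃ i, 1 ≤ i ∧ i ≤ n ∧ u = BV.a i ∧ v = BV.b i) ∨
  (∃ i, 1 ≤ i ∧ i ≤ n ∧ u = BV.a i ∧ v = aN n (i + 1)) ∨
  (∃ i, 1 ≤ i ∧ i ≤ n ∧ u = BV.a i ∧ v = BV.t) ∨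
  (∃ i, 1 ≤ i ∧ i ≤ n ∧ u = BV.b i ∧ v = bN n (i + 1)) ∨
  (∃ i, 1 ≤ i ∧ i ≤ n ∧ u = BV.b i ∧ v = aN n (i + 1)) ∨
  (u = BV.d ∧ v = BV.s) ∨ (u = BV.s ∧ v = BV.s)

/-- The reward function of `𝔅_n`: `r(enter i) = 2^i`, `r(stay i) = 3/4`,
`r(board i) = -2^i + 5/4`, and reward `0` on all other edges. -/
def rB (n : ℕ) (u v : BV) : ℚ :=
  match u, v with
  | BV.a i, BV.b j => if i = j then 2 ^ i else 0
  | BV.a i, BV.t => -(2 ^ i) + 5 / 4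
  | BV.b i, BV.b j => if j = i + 1 then 3 / 4 else 0
  | BV.b i, BV.d => if i = n then 3 / 4 else 0
  | _, _ => 0

/-- A policy for `𝔅_n` chooses an outgoing edge at every vertex. -/
def IsBPolicy (n : ℕ) (π : BV → BV) : Prop := ∀ u, IsBVertex n u → BEdge n u (π u)

/-- A policy is weak unichain if it reaches the sink `s` from every vertex. -/
def BWeakUnichain (n : ℕ) (π : BV → BV) : Prop :=
  ∀ u, IsBVertex n u → ∃ k, π^[k] u = BV.s

open Classical in
/-- The value of a vertex `v` w.r.t. a (weak unichain) policy `π`: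
the sum of the rewards along the path that `π` takes from `v` to the sink `s`. -/
noncomputable def BVal (n : ℕ) (π : BV → BV) (v : BV) : ℚ :=
  if h : ∃ k, π^[k] v = BV.s then
    ∑ i ∈ Finset.range (Nat.find h), rB n (π^[i] v) (π^[i + 1] v)
  else 0

/-- The reduced costs of the edge `(u,v)` w.r.t. the policy `π`. -/
noncomputable def zB (n : ℕ) (π : BV → BV) (u v : BV) : ℚ :=
  rB n u v + BVal n π v - BVal n π u

/-- The edge `(u,v)` is an improving switch for `π` if its reduced costs are positive. -/
def BImproving (n : ℕ) (π : BV → BV) (u v : BV) : Prop :=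
  BEdge n u v ∧ 0 < zB n π u v

/-- The Bland numbering `𝒩_{𝔅_n}` of the edges of `𝔅_n`. -/
def NB (n : ℕ) (u v : BV) : ℕ :=
  match u, v with
  | BV.t, BV.a i => i
  | BV.a i, BV.b _ => n + 1 + 5 * (i - 1)
  | BV.a i, BV.a _ => n + 2 + 5 * (i - 1)
  | BV.a i, BV.s => n + 2 + 5 * (i - 1)
  | BV.a i, BV.t => n + 3 + 5 * (i - 1)
  | BV.b i, BV.b _ => n + 4 + 5 * (i - 1)
  | BV.b i, BV.d => n + 4 + 5 * (i - 1)
  | BV.b i, BV.a _ => n + 5 + 5 * (i - 1)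
  | BV.b i, BV.s => n + 5 + 5 * (i - 1)
  | BV.d, BV.s => 6 * n + 1
  | BV.s, BV.s => 6 * n + 2
  | _, _ => 0

/-- One step of Bland's policy iteration with edge numbering `N`:
apply the improving switch with the smallest number. -/
def IsBlandStep (n : ℕ) (N : BV → BV → ℕ) (π π' : BV → BV) : Prop :=
  ∃ u v, BImproving n π u v ∧ (∀ u' v', BImproving n π u' v' → N u v ≤ N u' v') ∧
    π' = Function.update π u v

/-- `BlandReaches n N π ψ` says that Bland's policy iteration started at `π` visits `ψ`. -/
def BlandReaches (n : ℕ) (N : BV → BV → ℕ) : (BV → BV) → (BV → BV) → Prop :=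
  Relation.ReflTransGen (IsBlandStep n N)

/-- The canonical policy `π_0` for `0`: `travel 1`, `skip i` and `leave i` are active. -/
def pi0 (n : ℕ) : BV → BV := fun u =>
  match u with
  | BV.t => BV.a 1
  | BV.a i => aN n (i + 1)
  | BV.b i => aN n (i + 1)
  | BV.d => BV.s
  | BV.s => BV.s

/-- The optimal policy `π_*`: `travel 1`, `enter i` for all `i`, `leave j` for `j < n`,
and `stay n` are active. -/
def piStar (n : ℕ) : BV → BV := fun u =>
  match u with
  | BV.t => BV.a 1
  | BV.a i => BV.b i
  | BV.b i => if i = n then BV.d else BV.a (i + 1)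
  | BV.d => BV.s
  | BV.s => BV.s

/-! ## Bits and canonical policies -/

/-- The least significant set bit `ℓ_1(x)` (1-based). -/
noncomputable def lsb (x : ℕ) : ℕ := sInf {i | 1 ≤ i ∧ Nat.testBit x (i - 1)}

/-- The most significant set bit `m(x)` (1-based). -/
noncomputable def msb1 (x : ℕ) : ℕ := sSup {i | 1 ≤ i ∧ Nat.testBit x (i - 1)}

/-- The least unset bit `ℓ_0(x)` (1-based). -/
noncomputable def lzero (x : ℕ) : ℕ := sInf {i | 1 ≤ i ∧ ¬ Nat.testBit x (i - 1)}

/-- `L_i(x) = max { j ≤ i-2 | x_j = 1 or j = 1 }` (1-based bits). -/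
noncomputable def Lfun (i x : ℕ) : ℕ :=
  sSup {j | 1 ≤ j ∧ j ≤ i - 2 ∧ (Nat.testBit x (j - 1) ∨ j = 1)}

/-- `IsCanonical n x π` says that `π` is the canonical policy `π_x` for `x`. -/
noncomputable def IsCanonical (n x : ℕ) (π : BV → BV) : Prop :=
  IsBPolicy n π ∧
  if x = 0 then
    π BV.t = BV.a 1 ∧
      ∀ i, 1 ≤ i → i ≤ n → π (BV.a i) = aN n (i + 1) ∧ π (BV.b i) = aN n (i + 1)
  else
    π BV.t = BV.a (lsb x) ∧
    π (BV.b (msb1 x)) = aN n (msb1 x + 1) ∧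
    (∀ i, msb1 x < i → i ≤ n → π (BV.a i) = aN n (i + 1) ∧ π (BV.b i) = aN n (i + 1)) ∧
    ∀ i, 1 ≤ i → i ≤ n → Nat.testBit x (i - 1) →
      π (BV.a i) = BV.b i ∧
      (i = 2 → π (BV.b 1) = BV.a 2 ∧ (¬ Nat.testBit x 0 → π (BV.a 1) = BV.a 2)) ∧
      (3 ≤ i → Nat.testBit x (i - 2) → π (BV.b (i - 1)) = BV.a i) ∧
      (3 ≤ i → ¬ Nat.testBit x (i - 2) →
        π (BV.b (i - 1)) = BV.b i ∧ π (BV.a (i - 1)) = BV.a i ∧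
        π (BV.b (i - 2)) = BV.a (i - 1) ∧
        (Lfun i x < i - 2 →
          ∀ j, Lfun i x + 1 ≤ j → j ≤ i - 2 →
            π (BV.a j) = BV.t ∧ π (BV.b (j - 1)) = BV.b j) ∧
        (Lfun i x = 1 → ¬ Nat.testBit x 0 → π (BV.a 1) = BV.t))

/-- Activating a list of edges in a policy, from left to right. -/
def activateList (π : BV → BV) (L : List (BV × BV)) : BV → BV :=
  L.foldl (fun σ e => Function.update σ e.1 e.2) π

/-- The canonical phases w.r.t. an odd number `x` (with `ℓ := ℓ_0(x)`), as a list of edges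
to be activated in order. -/
noncomputable def phaseList (n x : ℕ) : List (BV × BV) :=
  let ℓ := lzero x
  (if Nat.testBit x ℓ then [(BV.b ℓ, aN n (ℓ + 1))] else []) ++
  (if Nat.testBit x ℓ ∨ msb1 x < ℓ then [(BV.b (ℓ - 1), BV.b ℓ)] else []) ++
  [(BV.a ℓ, BV.b ℓ), (BV.t, BV.a ℓ)] ++
  ((List.range (ℓ - 2)).map fun j => (BV.a (j + 1), BV.t)) ++
  [(BV.a (ℓ - 1), BV.a ℓ)] ++
  (((List.range (ℓ - 3)).reverse).map fun j => (BV.b (j + 1), BV.b (j + 2))) ++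
  (if ℓ = 2 then [(BV.b 1, BV.a 2)] else [])

/-! ## The Markov decision process `𝔇_n` -/

/-- Vertices of `𝔇_n`: the original vertices (`base`), and for every edge `(v,w)` of `𝔅_n`
other than the self-loop, the gadget vertices `x v w`, `y v w`, `z v w`. -/
inductive DV : Type where
  | base : BV → DV
  | x : BV → BV → DV
  | y : BV → BV → DV
  | z : BV → BV → DV
deriving DecidableEq

/-- The edges of `𝔅_n` that get replaced by gadgets (all edges except the self-loop `(s,s)`). -/
def DEdgePair (n : ℕ) (v w : BV) : Prop := BEdge n v w ∧ v ≠ BV.s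

/-- The vertex set of `𝔇_n`. -/
def IsDVertex (n : ℕ) : DV → Prop
  | DV.base v => IsBVertex n v
  | DV.x v w => DEdgePair n v w
  | DV.y v w => DEdgePair n v w
  | DV.z v w => DEdgePair n v w

/-- The agent vertices of `𝔇_n` (all vertices except the randomization vertices `y v w`). -/
def IsDAgent (n : ℕ) : DV → Prop
  | DV.base v => IsBVertex n v
  | DV.x v w => DEdgePair n v w
  | DV.y _ _ => False
  | DV.z v w => DEdgePair n v w

/-- The agent edges of `𝔇_n`. -/
def DEdge (n : ℕ) (u u' : DV) : Prop :=
  (∃ v w, DEdgePair n v w ∧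
    ((u = DV.base v ∧ u' = DV.x v w) ∨ (u = DV.x v w ∧ u' = DV.base v) ∨
     (u = DV.x v w ∧ u' = DV.y v w) ∨ (u = DV.z v w ∧ u' = DV.base w))) ∨
  (u = DV.base BV.s ∧ u' = DV.base BV.s)

/-- The reward function of `𝔇_n`: the edge `(z v w, w)` carries the reward of the original
edge `(v,w)`; all other agent edges have reward `0`. -/
def rD (n : ℕ) (u u' : DV) : ℚ :=
  match u, u' with
  | DV.z v w, DV.base w' => if w' = w then rB n v w else 0
  | _, _ => 0

/-- A policy for `𝔇_n` chooses an outgoing agent edge at every agent vertex. -/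
def IsDPolicy (n : ℕ) (π : DV → DV) : Prop := ∀ u, IsDAgent n u → DEdge n u (π u)

/-- `IsDVal n p π V` says that `V` satisfies the Bellman equations characterizing the value
function of the policy `π` for `𝔇_n` with probabilities `p`, with `V s = 0`. -/
def IsDVal (n : ℕ) (p : BV → ℚ) (π : DV → DV) (V : DV → ℚ) : Prop :=
  V (DV.base BV.s) = 0 ∧
  (∀ u, IsDAgent n u → V u = rD n u (π u) + V (π u)) ∧
  (∀ v w, DEdgePair n v w →
    V (DV.y v w) = p v * V (DV.z v w) + (1 - p v) * V (DV.base v))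

open Classical in
/-- The value function of a (weak unichain) policy `π` for `𝔇_n`: the unique solution of the
Bellman equations (normalized to `0` outside the vertex set). -/
noncomputable def DVal (n : ℕ) (p : BV → ℚ) (π : DV → DV) : DV → ℚ :=
  if h : ∃! V : DV → ℚ, IsDVal n p π V ∧ ∀ u, ¬ IsDVertex n u → V u = 0 then
    h.exists.choose
  else fun _ => 0

/-- The reduced costs of an agent edge `(u,u')` of `𝔇_n` w.r.t. the policy `π`. -/
noncomputable def zD (n : ℕ) (p : BV → ℚ) (π : DV → DV) (u u' : DV) : ℚ :=
  rD n u u' + DVal n p π u' - DVal n p π u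

/-- An agent edge of `𝔇_n` is an improving switch if its reduced costs are positive. -/
def DImproving (n : ℕ) (p : BV → ℚ) (π : DV → DV) (u u' : DV) : Prop :=
  DEdge n u u' ∧ 0 < zD n p π u u'

/-- One (agent or positive-probability randomization) step of the process `𝔇_n` under `π`. -/
def DStep (n : ℕ) (p : BV → ℚ) (π : DV → DV) (u u' : DV) : Prop :=
  (IsDAgent n u ∧ u' = π u) ∨
  (∃ v w, DEdgePair n v w ∧ u = DV.y v w ∧
    ((u' = DV.z v w ∧ 0 < p v) ∨ (u' = DV.base v ∧ 0 < 1 - p v)))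

/-- A policy for `𝔇_n` is weak unichain if it reaches `s` with probability one from every
vertex, i.e. `s` is reachable via active/positive-probability steps from every vertex. -/
def DWeakUnichain (n : ℕ) (p : BV → ℚ) (π : DV → DV) : Prop :=
  ∀ u, IsDVertex n u → Relation.ReflTransGen (DStep n p π) u (DV.base BV.s)

/-- The twin policy of a policy `π` for `𝔅_n`: every vertex `v ≠ s` is `π v`-oriented. -/
def twin (π : BV → BV) : DV → DV := fun u =>
  match u with
  | DV.base v => if v = BV.s then DV.base BV.s else DV.x v (π v)
  | DV.x v w => if w = π v then DV.y v w else DV.base v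
  | DV.y v w => DV.y v w
  | DV.z _ w => DV.base w

/-- The vertex numbering `𝒩_V` of `𝔅_n`: the order `(t, a 1, b 1, a 2, b 2, …, a n, b n, d, s)`. -/
def NV (n : ℕ) : BV → ℕ
  | BV.t => 1
  | BV.a i => 2 * i
  | BV.b i => 2 * i + 1
  | BV.d => 2 * n + 2
  | BV.s => 2 * n + 3

/-- The specific probabilities `p_v = 2^{-𝒩_V(v)·(n+5)}`. -/
noncomputable def pSpec (n : ℕ) (v : BV) : ℚ := (2 : ℚ) ^ (-((NV n v * (n + 5) : ℕ) : ℤ))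

/-- The set `B(v)` of agent edges of `𝔇_n` belonging to the vertex `v`. -/
def Belongs (n : ℕ) (v : BV) (e : DV × DV) : Prop :=
  ∃ w, DEdgePair n v w ∧
    (e = (DV.x v w, DV.y v w) ∨ e = (DV.base v, DV.x v w) ∨ e = (DV.x v w, DV.base v))

/-- Applying the improving switch `e` to the policy `π` yields `π'`. -/
def DApply (n : ℕ) (p : BV → ℚ) (π : DV → DV) (e : DV × DV) (π' : DV → DV) : Prop :=
  DImproving n p π e.1 e.2 ∧ π' = Function.update π e.1 e.2

/-- One step of Bland's policy iteration on `𝔇_n` with edge numbering `N`. -/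
def IsBlandStepD (n : ℕ) (p : BV → ℚ) (N : DV → DV → ℕ) (π π' : DV → DV) : Prop :=
  ∃ u u', DImproving n p π u u' ∧ (∀ a b, DImproving n p π a b → N u u' ≤ N a b) ∧
    π' = Function.update π u u'

/-- One step of Dantzig's policy iteration on `𝔇_n`: apply an improving switch of maximal
reduced costs. -/
def DantzigStep (n : ℕ) (p : BV → ℚ) (π π' : DV → DV) : Prop :=
  ∃ u u', DImproving n p π u u' ∧
    (∀ a b, DImproving n p π a b → zD n p π a b ≤ zD n p π u u') ∧
    π' = Function.update π u u'

/-- The finite set of vertices of `𝔅_n`, as a `Finset`. -/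
noncomputable def BVSet (n : ℕ) : Finset BV :=
  {BV.t, BV.d, BV.s} ∪ (Finset.Icc 1 n).image BV.a ∪ (Finset.Icc 1 n).image BV.b

/-- The finite set of agent vertices of `𝔇_n`, as a `Finset`. -/
noncomputable def DAgentSet (n : ℕ) : Finset DV := by
  classical
  exact ((BVSet n).image DV.base) ∪
    (((BVSet n ×ˢ BVSet n).filter fun e => DEdgePair n e.1 e.2).image fun e => DV.x e.1 e.2) ∪
    (((BVSet n ×ˢ BVSet n).filter fun e => DEdgePair n e.1 e.2).image fun e => DV.z e.1 e.2)

/-- The objective of the Largest Increase rule: the sum of the values of all agent vertices. -/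
noncomputable def LIobj (n : ℕ) (p : BV → ℚ) (π : DV → DV) : ℚ :=
  ∑ u ∈ DAgentSet n, DVal n p π u

/-- One step of the Largest Increase policy iteration on `𝔇_n`: apply an improving switch
maximizing the sum of all agent vertex values of the resulting policy. -/
def LIStep (n : ℕ) (p : BV → ℚ) (π π' : DV → DV) : Prop :=
  ∃ u u', DImproving n p π u u' ∧
    (∀ a b, DImproving n p π a b →
      LIobj n p (Function.update π a b) ≤ LIobj n p (Function.update π u u')) ∧
    π' = Function.update π u u'

/-- `N` is a Bland numbering `𝒩_{𝔇_n}` for `𝔇_n`: it is injective on agent edges, the edges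
`(x v w, v)` all come first, within each gadget `(x v w, y v w)` precedes `(v, x v w)`,
the gadget blocks are ordered according to `𝒩_{𝔅_n}`, and the self-loop comes last. -/
def IsDBlandNumbering (n : ℕ) (N : DV → DV → ℕ) : Prop :=
  (∀ u₁ u₂ u₁' u₂', DEdge n u₁ u₂ → DEdge n u₁' u₂' → N u₁ u₂ = N u₁' u₂' →
    u₁ = u₁' ∧ u₂ = u₂') ∧
  (∀ v w v' w', DEdgePair n v w → DEdgePair n v' w' →
    N (DV.x v w) (DV.base v) < N (DV.x v' w') (DV.y v' w')) ∧
  (∀ v w, DEdgePair n v w → N (DV.x v w) (DV.y v w) < N (DV.base v) (DV.x v w)) ∧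
  (∀ v w v' w', DEdgePair n v w → DEdgePair n v' w' → NB n v w < NB n v' w' →
    N (DV.base v) (DV.x v w) < N (DV.x v' w') (DV.y v' w')) ∧
  (∀ v w, DEdgePair n v w → N (DV.base v) (DV.x v w) < N (DV.base BV.s) (DV.base BV.s))

/-!
Let `V` satisfy the Bellman equations of a policy for `𝔇_n`. Inside the gadget of an edge `(v, w)`
they read `V (z v w) = r(v, w) + V w` and `V (y v w) = V v + p_v (r(v, w) + V w - V v)`. If `v` is
oriented, then `V (x v w) = V v`, so moving from `x v w` to `y v w` gains exactly `p_v` times the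
reduced cost of `(v, w)` computed with the values at the original vertices. If `v` is `w`-oriented,
then also `V (y v w) = V v`; as `p_v ≠ 0`, this leaves `V v = r(v, w) + V w`, so for the twin
policy of `π` these values obey the recursion of `Val_π` along the path of `π` to the sink.
-/

theorem BEdge.isBVertex_left {n : ℕ} {u v : BV} (h : BEdge n u v) : IsBVertex n u := by
  rcases h with ⟨_, _, _, rfl, _⟩ | ⟨i, h1, hn, rfl, _⟩ | ⟨i, h1, hn, rfl, _⟩ |
    ⟨i, h1, hn, rfl, _⟩ | ⟨i, h1, hn, rfl, _⟩ | ⟨i, h1, hn, rfl, _⟩ | ⟨rfl, _⟩ | ⟨rfl, _⟩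
  · trivial
  · exact ⟨h1, hn⟩
  · exact ⟨h1, hn⟩
  · exact ⟨h1, hn⟩
  · exact ⟨h1, hn⟩
  · exact ⟨h1, hn⟩
  · trivial
  · trivial

theorem isBVertex_aN_succ {n i : ℕ} (hi : i ≤ n) : IsBVertex n (aN n (i + 1)) := by
  unfold aN
  split_ifs
  · trivial
  · exact ⟨by omega, by omega⟩

theorem isBVertex_bN_succ {n i : ℕ} (hi : i ≤ n) : IsBVertex n (bN n (i + 1)) := by
  unfold bN
  split_ifs
  · trivial
  · exact ⟨by omega, by omega⟩

theorem BEdge.isBVertex_right {n : ℕ} {u v : BV} (h : BEdge n u v) : IsBVertex n v := by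
  rcases h with ⟨i, h1, hn, _, rfl⟩ | ⟨i, h1, hn, _, rfl⟩ | ⟨i, _, hn, _, rfl⟩ |
    ⟨i, _, _, _, rfl⟩ | ⟨i, _, hn, _, rfl⟩ | ⟨i, _, hn, _, rfl⟩ | ⟨_, rfl⟩ | ⟨_, rfl⟩
  · exact ⟨h1, hn⟩
  · exact ⟨h1, hn⟩
  · exact isBVertex_aN_succ hn
  · trivial
  · exact isBVertex_bN_succ hn
  · exact isBVertex_aN_succ hn
  · trivial
  · trivial

theorem BVal_s (n : ℕ) (π : BV → BV) : BVal n π BV.s = 0 := by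
  have hs : ∃ k, π^[k] BV.s = BV.s := ⟨0, rfl⟩
  simp only [BVal, dif_pos hs, (Nat.find_eq_zero hs).2 rfl, Finset.sum_range_zero]

theorem BVal_eq_add {n : ℕ} {π : BV → BV} {v : BV} (hv : v ≠ BV.s)
    (h : ∃ k, π^[k] v = BV.s) : BVal n π v = rB n v (π v) + BVal n π (π v) := by
  classical
  have h' : ∃ k, π^[k] (π v) = BV.s := by
    obtain ⟨_ | k, hk⟩ := h
    · exact absurd hk hv
    · exact ⟨k, hk⟩
  have hfind : Nat.find h = Nat.find h' + 1 := Nat.find_comp_succ h h' hv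
  simp only [BVal, dif_pos h, dif_pos h']
  convert Finset.sum_range_succ' (fun i ↦ rB n (π^[i] v) (π^[i + 1] v)) (Nat.find h') using 1
  · convert rfl
    exact hfind.symm
  · rw [add_comm]
    rfl

theorem IsDAgent.isDVertex {n : ℕ} {u : DV} (h : IsDAgent n u) : IsDVertex n u := by
  cases u with
  | y => exact h.elim
  | _ => exact h

theorem DEdge.isDVertex_right {n : ℕ} {u u' : DV} (h : DEdge n u u') : IsDVertex n u' := by
  obtain ⟨v, w, hvw, ⟨_, rfl⟩ | ⟨_, rfl⟩ | ⟨_, rfl⟩ | ⟨_, rfl⟩⟩ | ⟨_, rfl⟩ := h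
  · exact hvw
  · exact hvw.1.isBVertex_left
  · exact hvw
  · exact hvw.1.isBVertex_right
  · trivial

/-- The vertex `v` is `w`-oriented with respect to the policy `σ` for `𝔇_n`: `σ` steers `v` into
the gadget of the edge `(v, w)` and leads back to `v` from all other gadgets at `v`. As in the
paper, `(v, w)` is required to be an edge of `𝔅_n` with `v ≠ s`. -/
structure IsOriented (n : ℕ) (σ : DV → DV) (v w : BV) : Prop where
  edge : DEdgePair n v w
  base_eq : σ (DV.base v) = DV.x v w
  x_eq : σ (DV.x v w) = DV.y v w
  x_eq_of_ne : ∀ u, DEdgePair n v u → u ≠ w → σ (DV.x v u) = DV.base v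

section Gadget

variable {n : ℕ} {p : BV → ℚ} {σ : DV → DV} {V W : DV → ℚ} {u v w : BV}

theorem IsDPolicy.x_eq_base_or_y (hσ : IsDPolicy n σ) (hvw : DEdgePair n v w) :
    σ (DV.x v w) = DV.base v ∨ σ (DV.x v w) = DV.y v w := by
  simpa [DEdge, and_or_left, exists_or, hvw] using hσ (DV.x v w) hvw

theorem IsDPolicy.z_eq_base (hσ : IsDPolicy n σ) (hvw : DEdgePair n v w) :
    σ (DV.z v w) = DV.base w := by
  simpa [DEdge, hvw] using hσ (DV.z v w) hvw

theorem IsDVal.z_eq (hV : IsDVal n p σ V) (hσ : IsDPolicy n σ) (hvw : DEdgePair n v w) :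
    V (DV.z v w) = rB n v w + V (DV.base w) := by
  rw [hV.2.1 (DV.z v w) hvw, hσ.z_eq_base hvw]
  simp only [rD, if_true]

theorem IsDVal.y_eq (hV : IsDVal n p σ V) (hσ : IsDPolicy n σ) (hvw : DEdgePair n v w) :
    V (DV.y v w) = V (DV.base v) + p v * (rB n v w + V (DV.base w) - V (DV.base v)) := by
  rw [hV.2.2 v w hvw, hV.z_eq hσ hvw]
  ring

theorem IsDVal.x_eq (hV : IsDVal n p σ V) (hvw : DEdgePair n v w) :
    V (DV.x v w) = V (σ (DV.x v w)) := by
  rw [hV.2.1 (DV.x v w) hvw]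
  exact zero_add _

theorem IsDVal.x_eq_base (hV : IsDVal n p σ V) (hvw : IsOriented n σ v w)
    (hvu : DEdgePair n v u) : V (DV.x v u) = V (DV.base v) := by
  by_cases huw : u = w
  · rw [huw, hV.2.1 (DV.base v) hvw.edge.1.isBVertex_left, hvw.base_eq]
    exact (zero_add _).symm
  · rw [hV.x_eq hvu, hvw.x_eq_of_ne u hvu huw]

theorem IsDVal.base_eq_add (hV : IsDVal n p σ V) (hσ : IsDPolicy n σ) (hp : p v ≠ 0)
    (hvw : IsOriented n σ v w) : V (DV.base v) = rB n v w + V (DV.base w) := by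
  have hy : V (DV.y v w) = V (DV.base v) := by
    rw [← hV.x_eq_base hvw hvw.edge, hV.x_eq hvw.edge, hvw.x_eq]
  have hgain : p v * (rB n v w + V (DV.base w) - V (DV.base v)) = 0 := by
    linarith [hV.y_eq hσ hvw.edge]
  linarith [(mul_eq_zero.1 hgain).resolve_left hp]

theorem IsDVal.eq_of_base_eq (hV : IsDVal n p σ V) (hW : IsDVal n p σ W) (hσ : IsDPolicy n σ)
    (hbase : ∀ v, IsBVertex n v → V (DV.base v) = W (DV.base v)) :
    ∀ u, IsDVertex n u → V u = W u := by
  have hy : ∀ v w, DEdgePair n v w → V (DV.y v w) = W (DV.y v w) := fun v w hvw ↦ by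
    rw [hV.y_eq hσ hvw, hW.y_eq hσ hvw, hbase v hvw.1.isBVertex_left,
      hbase w hvw.1.isBVertex_right]
  rintro (v | ⟨v, w⟩ | ⟨v, w⟩ | ⟨v, w⟩) hu
  · exact hbase v hu
  · rw [hV.x_eq hu, hW.x_eq hu]
    rcases hσ.x_eq_base_or_y hu with h | h <;> rw [h]
    · exact hbase v hu.1.isBVertex_left
    · exact hy v w hu
  · exact hy v w hu
  · rw [hV.z_eq hσ hu, hW.z_eq hσ hu, hbase w hu.1.isBVertex_right]

theorem IsDVal.congr (hV : IsDVal n p σ V) (hσ : IsDPolicy n σ)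
    (hWV : ∀ u, IsDVertex n u → W u = V u) : IsDVal n p σ W := by
  refine ⟨?_, fun u hu ↦ ?_, fun v w hvw ↦ ?_⟩
  · rw [hWV (DV.base BV.s) trivial, hV.1]
  · rw [hWV u hu.isDVertex, hWV (σ u) (hσ u hu).isDVertex_right, hV.2.1 u hu]
  · rw [hWV (DV.y v w) hvw, hWV (DV.z v w) hvw, hWV (DV.base v) hvw.1.isBVertex_left,
      hV.2.2 v w hvw]

/- `DVal` is the zero function unless the normalized solution is unique, so it solves the Bellman
equations only once existence and uniqueness are known. -/
theorem isDVal_DVal (hσ : IsDPolicy n σ) (hV : IsDVal n p σ V)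
    (huniq : ∀ W, IsDVal n p σ W → ∀ v, IsBVertex n v → W (DV.base v) = V (DV.base v)) :
    IsDVal n p σ (DVal n p σ) := by
  classical
  have hex : ∃! V, IsDVal n p σ V ∧ ∀ u, ¬ IsDVertex n u → V u = 0 := by
    refine ⟨fun u ↦ if IsDVertex n u then V u else 0,
      ⟨hV.congr hσ fun u hu ↦ if_pos hu, fun u hu ↦ if_neg hu⟩, ?_⟩
    rintro W ⟨hW, hW0⟩
    funext u
    split_ifs with hu
    · exact hW.eq_of_base_eq hV hσ (huniq W hW) u hu
    · exact hW0 u hu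
  rw [DVal, dif_pos hex]
  exact hex.exists.choose_spec.1

theorem zD_x_y (hσ : IsDPolicy n σ) (hD : IsDVal n p σ (DVal n p σ)) (hvu : IsOriented n σ v u)
    (hvw : DEdgePair n v w) :
    zD n p σ (DV.x v w) (DV.y v w) =
      p v * (rB n v w + DVal n p σ (DV.base w) - DVal n p σ (DV.base v)) := by
  rw [zD, hD.y_eq hσ hvw, hD.x_eq_base hvu hvw]
  simp only [rD]
  ring

end Gadget

section Twin

variable {n : ℕ} {p : BV → ℚ} {π : BV → BV}

theorem isOriented_twin (hπ : IsBPolicy n π) {v : BV} (hv : IsBVertex n v) (hs : v ≠ BV.s) :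
    IsOriented n (twin π) v (π v) where
  edge := ⟨hπ v hv, hs⟩
  base_eq := if_neg hs
  x_eq := if_pos rfl
  x_eq_of_ne _ _ hu := if_neg hu

theorem isDPolicy_twin (hπ : IsBPolicy n π) : IsDPolicy n (twin π) := by
  rintro (v | ⟨v, w⟩ | ⟨v, w⟩ | ⟨v, w⟩) hu
  · by_cases hs : v = BV.s
    · exact Or.inr ⟨congrArg DV.base hs, if_pos hs⟩
    · exact Or.inl ⟨v, π v, ⟨hπ v hu, hs⟩, Or.inl ⟨rfl, if_neg hs⟩⟩
  · by_cases hw : w = π v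
    · exact Or.inl ⟨v, w, hu, Or.inr (Or.inr (Or.inl ⟨rfl, if_pos hw⟩))⟩
    · exact Or.inl ⟨v, w, hu, Or.inr (Or.inl ⟨rfl, if_neg hw⟩)⟩
  · exact hu.elim
  · exact Or.inl ⟨v, w, hu, Or.inr (Or.inr (Or.inr ⟨rfl, rfl⟩))⟩

/-- The values of the twin policy of `π`, expressed through the values of `π`: an explicit solution
of the Bellman equations. It is not set to zero outside the vertex set of `𝔇_n`, unlike `DVal`. -/
noncomputable def twinVal (n : ℕ) (p : BV → ℚ) (π : BV → BV) : DV → ℚ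
  | DV.base v => BVal n π v
  | DV.x v _ => BVal n π v
  | DV.y v w => p v * (rB n v w + BVal n π w) + (1 - p v) * BVal n π v
  | DV.z v w => rB n v w + BVal n π w

theorem isDVal_twinVal (p : BV → ℚ) (hwu : BWeakUnichain n π) :
    IsDVal n p (twin π) (twinVal n p π) := by
  refine ⟨BVal_s n π, ?_, fun v w _ ↦ rfl⟩
  rintro (v | ⟨v, w⟩ | ⟨v, w⟩ | ⟨v, w⟩) hu
  · by_cases hs : v = BV.s <;> simp [twin, rD, twinVal, hs]
  · by_cases hw : w = π v
    · have hstep := BVal_eq_add (n := n) hu.2 (hwu v hu.1.isBVertex_left)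
      simp only [twin, rD, twinVal, hw, if_true, ← hstep]
      ring
    · simp [twin, rD, twinVal, hw]
  · exact hu.elim
  · simp [twin, rD, twinVal]

theorem IsDVal.base_eq_BVal (hp : ∀ v, IsBVertex n v → v ≠ BV.s → p v ≠ 0)
    (hπ : IsBPolicy n π) {V : DV → ℚ} (hV : IsDVal n p (twin π) V) {k : ℕ} {v : BV}
    (hv : IsBVertex n v) (hk : π^[k] v = BV.s) : V (DV.base v) = BVal n π v := by
  induction k generalizing v with
  | zero => rw [show v = BV.s from hk, hV.1, BVal_s]
  | succ k ih =>
    by_cases hs : v = BV.s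
    · rw [hs, hV.1, BVal_s]
    · rw [hV.base_eq_add (isDPolicy_twin hπ) (hp v hv hs) (isOriented_twin hπ hv hs),
        ih (hπ v hv).isBVertex_right hk, ← BVal_eq_add hs ⟨k + 1, hk⟩]

theorem zD_twin_x_y (hp : ∀ v, IsBVertex n v → v ≠ BV.s → p v ≠ 0) (hπ : IsBPolicy n π)
    (hwu : BWeakUnichain n π) {v w : BV} (hvw : DEdgePair n v w) :
    zD n p (twin π) (DV.x v w) (DV.y v w) = p v * zB n π v w := by
  have hbase : ∀ V, IsDVal n p (twin π) V → ∀ u, IsBVertex n u → V (DV.base u) = BVal n π u :=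
    fun V hV u hu ↦ (hwu u hu).elim fun _ hk ↦ hV.base_eq_BVal hp hπ hu hk
  have hσ : IsDPolicy n (twin π) := isDPolicy_twin hπ
  have hD : IsDVal n p (twin π) (DVal n p (twin π)) := isDVal_DVal hσ (isDVal_twinVal p hwu) hbase
  have hv : IsBVertex n v := hvw.1.isBVertex_left
  rw [zD_x_y hσ hD (isOriented_twin hπ hv hvw.2) hvw, hbase _ hD v hv,
    hbase _ hD w hvw.1.isBVertex_right, zB]

end Twin

/-- For a weak unichain policy `π` for `𝔅_n` with twin policy `π'` and an edge `(v,w)` of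
`𝔅_n` other than the self-loop: `z_{π'}(x v w, y v w) = p_v · z_π(v,w)`; in particular,
`(x v w, y v w)` is improving for `π'` iff `(v,w)` is improving for `π`. -/
theorem stmt12 (n : ℕ) (hn : 1 ≤ n) (p : BV → ℚ)
    (hp : ∀ v, IsBVertex n v → v ≠ BV.s → 0 < p v ∧ p v ≤ 1)
    (π : BV → BV) (hπ : IsBPolicy n π) (hwu : BWeakUnichain n π)
    (v w : BV) (hvw : DEdgePair n v w) :
    zD n p (twin π) (DV.x v w) (DV.y v w) = p v * zB n π v w ∧
    (DImproving n p (twin π) (DV.x v w) (DV.y v w) ↔ BImproving n π v w) := by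
  have hpos : 0 < p v := (hp v hvw.1.isBVertex_left hvw.2).1
  have hz : zD n p (twin π) (DV.x v w) (DV.y v w) = p v * zB n π v w :=
    zD_twin_x_y (fun u hu hs ↦ (hp u hu hs).1.ne') hπ hwu hvw
  have hedge : DEdge n (DV.x v w) (DV.y v w) :=
    Or.inl ⟨v, w, hvw, Or.inr (Or.inr (Or.inl ⟨rfl, rfl⟩))⟩
  refine ⟨hz, ?_⟩
  rw [DImproving, BImproving, hz, mul_pos_iff_of_pos_left hpos, and_iff_right hedge,
    and_iff_right hvw.1]
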